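/- Let β=(1,2) and γ∈{γ_adj,γ_opp}. (a) There exist constants 0<c<C and A*≥1 such that for all A_1≥A* (and A_2=10A_1), every (1,2)-cube Q=I×J and every x∈Q: c·ℓ(I) ≤ m(I(x,+,W_1)) ≤ C·ℓ(I), where m is one-dimensional Lebesgue measure. (b) For every ε>0 there exists A**≥1 such that for all A_1≥A**, every (1,2)-cube Q and all x,x'∈Q: m(I(x,+,W_1)) ≤ (1+ε)·m(I(x',+,W_1)). -/

import Mathlib

/-!
Write `c₁`, `c₂` for the midpoints of `I_{A₁}`, `I_{A₂}`, and put `t = c₁ + v`, `s = c₂ + u`. All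
parameters that occur are nonnegative, and there both curves are `t ↦ (t, t²)`. So, for
`x = (x₀ + a, y₀ + b) ∈ Q`, the point `x + γ(t)` lies in `P̃` iff some `s ∈ I_{A₂}` satisfies

* `a + v + u ∈ [0, L]`, and
* `b + (t² - c₁²) + (s² - c₂²) ∈ [0, L²]`.

Since `t² - c₁² + s² - c₂² = 2LA₁(v + 10u) + O(L²)`, the second condition forces
`u = -v/10 + O(L/A₁)`, and the first then says `a + (9/10)v ∈ [0, L]` up to an error `O(L/A₁)`.
Conversely, for such `v` one can solve `t² + s² = c₁² + c₂²` for `s ∈ I_{A₂}`, while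
`x + γ(t) ∈ Q̃` because `t` itself lies in `I_{A₁}`. Thus the fibre is squeezed between two
concentric intervals of length `(10/9)(1 + O(1/A₁))L`, uniformly in `x`.
-/

open MeasureTheory Set

noncomputable section

/-- The parabola `γ_adj(t) = (t, t²)` (parts in adjacent quadrants). -/
def gAdj (t : ℝ) : ℝ × ℝ := (t, t ^ 2)

/-- The parabola `γ_opp(t) = (t, sign(t)·t²)` (parts in opposite quadrants). -/
def gOpp (t : ℝ) : ℝ × ℝ := (t, Real.sign t * t ^ 2)

/-- The `(1,2)`-cube `Q = I × J` with `I = [x₀, x₀+L]`, `J = [y₀, y₀+L²]`,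
so that `ℓ(J) = ℓ(I)²`. -/
def cubeQ (x0 y0 L : ℝ) : Set (ℝ × ℝ) :=
  Icc x0 (x0 + L) ×ˢ Icc y0 (y0 + L ^ 2)

/-- The auxiliary interval `I_A = ℓ(I)·[A, A+3]`. -/
def intA (L A : ℝ) : Set ℝ := Icc (L * A) (L * (A + 3))

/-- `Q̃ = {x + γ(t) : x ∈ Q, t ∈ I_{A₁}}`. -/
def tilQ (γ : ℝ → ℝ × ℝ) (x0 y0 L A1 : ℝ) : Set (ℝ × ℝ) :=
  {w | ∃ x ∈ cubeQ x0 y0 L, ∃ t ∈ intA L A1, w = x + γ t}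

/-- `P = V₁ + γ(c_{I_{A₂}})` with `V₁ = Q + γ(c_{I_{A₁}})` and `A₂ = 10·A₁`. -/
def setP (γ : ℝ → ℝ × ℝ) (x0 y0 L A1 : ℝ) : Set (ℝ × ℝ) :=
  (fun x => x + γ (L * (A1 + 3/2)) + γ (L * (10 * A1 + 3/2))) '' cubeQ x0 y0 L

/-- `P̃ = {z - γ(t) : z ∈ P, t ∈ I_{A₂}}` with `A₂ = 10·A₁`. -/
def tilP (γ : ℝ → ℝ × ℝ) (x0 y0 L A1 : ℝ) : Set (ℝ × ℝ) :=
  {w | ∃ z ∈ setP γ x0 y0 L A1, ∃ t ∈ intA L (10 * A1), w = z - γ t}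

/-- `W₁ = Q̃ ∩ P̃`. -/
def setW1 (γ : ℝ → ℝ × ℝ) (x0 y0 L A1 : ℝ) : Set (ℝ × ℝ) :=
  tilQ γ x0 y0 L A1 ∩ tilP γ x0 y0 L A1

/-- `φ(a, −, B) = {a − γ(t) : t ∈ ℝ} ∩ B`. -/
def phiM (γ : ℝ → ℝ × ℝ) (a : ℝ × ℝ) (B : Set (ℝ × ℝ)) : Set (ℝ × ℝ) :=
  {w ∈ B | ∃ t : ℝ, w = a - γ t}

/-- `I(a, +, B) = {t ∈ ℝ : a + γ(t) ∈ B}`. -/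
def IsetP (γ : ℝ → ℝ × ℝ) (a : ℝ × ℝ) (B : Set (ℝ × ℝ)) : Set ℝ :=
  {t : ℝ | a + γ t ∈ B}

/-- The midpoint `c_{I_A}` of the parameter interval `I_A`. -/
def intMid (L A : ℝ) : ℝ := L * (A + 3 / 2)

/-- The common midpoint of the intervals that approximate the fibre `I(x, +, W₁)` over a point `x`
with first coordinate `a`: the parameter `t` at which `a + (9/10)(t - c_{I_A})` is the midpoint of
`[x₀, x₀ + L]`. -/
def fibreMid (x0 L A a : ℝ) : ℝ := intMid L A + 10 / 9 * (x0 + L / 2 - a)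

/-- A curve parametrised by its first coordinate which is the parabola `(t, t²)` for `t ≥ 0`; this
is the common part of `γ_adj` and `γ_opp`. -/
structure IsHalfParabola (γ : ℝ → ℝ × ℝ) : Prop where
  fst_eq (t : ℝ) : (γ t).1 = t
  snd_eq {t : ℝ} (ht : 0 ≤ t) : (γ t).2 = t ^ 2

lemma isHalfParabola_gAdj : IsHalfParabola gAdj := ⟨fun _ ↦ rfl, fun _ ↦ rfl⟩

lemma isHalfParabola_gOpp : IsHalfParabola gOpp where
  fst_eq _ := rfl
  snd_eq {t} ht := by
    rcases ht.eq_or_lt with rfl | ht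
    · simp [gOpp]
    · simp [gOpp, Real.sign_of_pos ht]

section Parameters

variable {L A k s t : ℝ}

lemma intMid_nonneg (hL : 0 ≤ L) (hA : 0 ≤ A) : 0 ≤ intMid L A := by
  unfold intMid
  positivity

lemma mem_intA_iff_abs_sub_intMid_le : t ∈ intA L A ↔ |t - intMid L A| ≤ 3 / 2 * L := by
  rw [intA, intMid, mem_Icc, abs_le]
  constructor <;> rintro ⟨hl, hr⟩ <;> constructor <;> linarith

lemma nonneg_of_mem_intA (hL : 0 ≤ L) (hA : 0 ≤ A) (ht : t ∈ intA L A) : 0 ≤ t :=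
  (mul_nonneg hL hA).trans ht.1

lemma abs_sub_add_mul_sub_le (hL : 0 < L) (hA : 0 < A)
    (ht : |t - intMid L A| ≤ 5 / 2 * L) (hs : |s - intMid L (k * A)| ≤ 3 / 2 * L)
    (h : |t ^ 2 + s ^ 2 - intMid L A ^ 2 - intMid L (k * A) ^ 2| ≤ L ^ 2) :
    |(t - intMid L A) + k * (s - intMid L (k * A))| ≤ 11 * (L / A) := by
  set v := t - intMid L A with hv
  set u := s - intMid L (k * A) with hu
  set E := 3 * L * (v + u) + v ^ 2 + u ^ 2 with hE
  have expansion : t ^ 2 + s ^ 2 - intMid L A ^ 2 - intMid L (k * A) ^ 2 =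
      2 * L * A * (v + k * u) + E := by
    rw [hE, hv, hu]
    unfold intMid
    ring
  have error_le : |E| ≤ 21 * L ^ 2 := by
    have hv2 : v ^ 2 ≤ (5 / 2 * L) ^ 2 := sq_le_sq.2 (ht.trans (le_abs_self _))
    have hu2 : u ^ 2 ≤ (3 / 2 * L) ^ 2 := sq_le_sq.2 (hs.trans (le_abs_self _))
    rw [abs_le] at ht hs ⊢
    constructor <;> nlinarith [sq_nonneg v, sq_nonneg u]
  have scaled : (2 * L) * (A * |v + k * u|) ≤ (2 * L) * (11 * L) :=
    calc (2 * L) * (A * |v + k * u|) = |2 * L * A * (v + k * u)| := by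
          rw [abs_mul, abs_of_pos (by positivity : 0 < 2 * L * A)]
          ring
      _ = |(2 * L * A * (v + k * u) + E) - E| := by rw [add_sub_cancel_right]
      _ ≤ |2 * L * A * (v + k * u) + E| + |E| := abs_sub _ _
      _ ≤ L ^ 2 + 21 * L ^ 2 := add_le_add (expansion ▸ h) error_le
      _ = (2 * L) * (11 * L) := by ring
  rw [← mul_div_assoc, le_div_iff₀' hA]
  exact le_of_mul_le_mul_left scaled (by positivity)

lemma exists_mem_intA_sq_add_sq_eq (hL : 0 ≤ L) (hA : 1 ≤ A) (ht : t ∈ intA L A) :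
    ∃ s ∈ intA L (10 * A), t ^ 2 + s ^ 2 = intMid L A ^ 2 + intMid L (10 * A) ^ 2 := by
  have ht0 : 0 ≤ t := nonneg_of_mem_intA hL (by linarith) ht
  have ht_lower : (L * A) ^ 2 ≤ t ^ 2 := pow_le_pow_left₀ (by positivity) ht.1 2
  have ht_upper : t ^ 2 ≤ (L * (A + 3)) ^ 2 := pow_le_pow_left₀ ht0 ht.2 2
  have h_endpoints : L * (10 * A) ≤ L * (10 * A + 3) := by linarith
  have h_between : intMid L A ^ 2 + intMid L (10 * A) ^ 2 - t ^ 2 ∈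
      Icc ((L * (10 * A)) ^ 2) ((L * (10 * A + 3)) ^ 2) := by
    unfold intMid
    constructor <;> nlinarith
  obtain ⟨s, hs, hs_eq⟩ :=
    intermediate_value_Icc h_endpoints (continuous_pow 2).continuousOn h_between
  exact ⟨s, hs, by linear_combination hs_eq⟩

/-- The second coordinate of `x + γ(t) + γ(s)` pins `s - c_{I_{10A}}` to `-(t - c_{I_A})/10`, so its
first coordinate moves with `t` at speed `9/10`. -/
lemma abs_sub_mul_sub_fibreMid_le (hL : 0 < L) (hA : 0 < A) (x0 a : ℝ)
    (ht : |t - intMid L A| ≤ 5 / 2 * L) (hs : s ∈ intA L (10 * A))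
    (h : |t ^ 2 + s ^ 2 - intMid L A ^ 2 - intMid L (10 * A) ^ 2| ≤ L ^ 2) :
    |(a + t + s - intMid L A - intMid L (10 * A) - (x0 + L / 2)) -
      9 / 10 * (t - fibreMid x0 L A a)| ≤ 11 / 10 * (L / A) := by
  have h_lin := abs_sub_add_mul_sub_le hL hA ht (mem_intA_iff_abs_sub_intMid_le.1 hs) h
  unfold fibreMid
  rw [abs_le] at h_lin ⊢
  constructor <;> linarith

end Parameters

section Membership

variable {γ : ℝ → ℝ × ℝ} {x0 y0 L A t : ℝ} {x w : ℝ × ℝ}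

lemma mem_tilP_iff : w ∈ tilP γ x0 y0 L A ↔
    ∃ s ∈ intA L (10 * A), w + γ s - γ (intMid L A) - γ (intMid L (10 * A)) ∈ cubeQ x0 y0 L := by
  constructor
  · rintro ⟨_, ⟨p, hp, rfl⟩, s, hs, rfl⟩
    refine ⟨s, hs, ?_⟩
    convert hp using 1
    simp only [intMid]
    abel
  · rintro ⟨s, hs, hp⟩
    refine ⟨_, ⟨_, hp, rfl⟩, s, hs, ?_⟩
    simp only [intMid]
    abel

lemma add_mem_tilQ (hx : x ∈ cubeQ x0 y0 L) (ht : t ∈ intA L A) : x + γ t ∈ tilQ γ x0 y0 L A :=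
  ⟨x, hx, t, ht, rfl⟩

namespace IsHalfParabola

lemma abs_sub_intMid_le_of_add_mem_tilQ (hγ : IsHalfParabola γ) (hx : x ∈ cubeQ x0 y0 L)
    (h : x + γ t ∈ tilQ γ x0 y0 L A) : |t - intMid L A| ≤ 5 / 2 * L := by
  obtain ⟨q, hq, r, hr, h_eq⟩ := h
  have h_fst : x.1 + t = q.1 + r := by simpa [hγ.fst_eq] using congrArg Prod.fst h_eq
  have hx1 : x.1 ∈ Icc x0 (x0 + L) := hx.1
  have hq1 : q.1 ∈ Icc x0 (x0 + L) := hq.1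
  rw [mem_intA_iff_abs_sub_intMid_le, abs_le] at hr
  rw [abs_le]
  constructor <;> linarith [hx1.1, hx1.2, hq1.1, hq1.2]

lemma add_mem_tilP_iff (hγ : IsHalfParabola γ) (hL : 0 ≤ L) (hA : 0 ≤ A) (ht : 0 ≤ t) :
    x + γ t ∈ tilP γ x0 y0 L A ↔ ∃ s ∈ intA L (10 * A),
      x.1 + t + s - intMid L A - intMid L (10 * A) ∈ Icc x0 (x0 + L) ∧
      x.2 + t ^ 2 + s ^ 2 - intMid L A ^ 2 - intMid L (10 * A) ^ 2 ∈ Icc y0 (y0 + L ^ 2) := by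
  rw [mem_tilP_iff]
  refine exists_congr fun s ↦ and_congr_right fun hs ↦ ?_
  have hA' : 0 ≤ 10 * A := by positivity
  simp only [cubeQ, mem_prod, Prod.fst_add, Prod.fst_sub, Prod.snd_add, Prod.snd_sub, hγ.fst_eq,
    hγ.snd_eq ht, hγ.snd_eq (nonneg_of_mem_intA hL hA' hs), hγ.snd_eq (intMid_nonneg hL hA),
    hγ.snd_eq (intMid_nonneg hL hA')]

lemma isetP_subset_closedBall (hγ : IsHalfParabola γ) (hL : 0 < L) (hA : 1 ≤ A)
    (hx : x ∈ cubeQ x0 y0 L) :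
    IsetP γ x (setW1 γ x0 y0 L A) ⊆
      Metric.closedBall (fibreMid x0 L A x.1) (5 / 9 * (L + 11 / 5 * (L / A))) := by
  rintro t ⟨htQ, htP⟩
  have ht : |t - intMid L A| ≤ 5 / 2 * L := hγ.abs_sub_intMid_le_of_add_mem_tilQ hx htQ
  have ht0 : 0 ≤ t := by
    have hLA : L ≤ L * A := le_mul_of_one_le_right hL.le hA
    unfold intMid at ht
    linarith [(abs_le.1 ht).1]
  obtain ⟨s, hs, h_fst, h_snd⟩ := (hγ.add_mem_tilP_iff hL.le (by linarith) ht0).1 htP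
  have hx2 : x.2 ∈ Icc y0 (y0 + L ^ 2) := hx.2
  have h_close := abs_sub_mul_sub_fibreMid_le hL (by linarith) x0 x.1 ht hs <| by
    rw [abs_le]
    constructor <;> linarith [h_snd.1, h_snd.2, hx2.1, hx2.2]
  rw [Metric.mem_closedBall, Real.dist_eq]
  rw [abs_le] at h_close ⊢
  constructor <;> linarith [h_fst.1, h_fst.2]

lemma closedBall_subset_isetP (hγ : IsHalfParabola γ) (hL : 0 < L) (hA : 1 ≤ A)
    (hx : x ∈ cubeQ x0 y0 L) :
    Metric.closedBall (fibreMid x0 L A x.1) (5 / 9 * (L - 11 / 5 * (L / A))) ⊆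
      IsetP γ x (setW1 γ x0 y0 L A) := by
  intro t ht
  rw [Metric.mem_closedBall, Real.dist_eq, abs_le] at ht
  have hx1 : x.1 ∈ Icc x0 (x0 + L) := hx.1
  have htI : t ∈ intA L A := by
    have h_err : 0 < L / A := by positivity
    rw [mem_intA_iff_abs_sub_intMid_le, abs_le]
    unfold fibreMid at ht
    constructor <;> linarith [hx1.1, hx1.2]
  have ht0 : 0 ≤ t := nonneg_of_mem_intA hL.le (by linarith) htI
  obtain ⟨s, hs, h_sq⟩ := exists_mem_intA_sq_add_sq_eq hL.le hA htI
  have h_close := abs_sub_mul_sub_fibreMid_le hL (by linarith) x0 x.1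
    ((mem_intA_iff_abs_sub_intMid_le.1 htI).trans (by linarith)) hs <| by
      rw [h_sq, add_sub_cancel_left, sub_self, abs_zero]
      positivity
  rw [abs_le] at h_close
  refine ⟨add_mem_tilQ hx htI, (hγ.add_mem_tilP_iff hL.le (by linarith) ht0).2 ⟨s, hs, ?_, ?_⟩⟩
  · constructor <;> linarith
  · convert hx.2 using 1
    linear_combination h_sq

lemma volume_isetP_mem_Icc (hγ : IsHalfParabola γ) (hL : 0 < L) (hA : 1 ≤ A)
    (hx : x ∈ cubeQ x0 y0 L) :
    volume (IsetP γ x (setW1 γ x0 y0 L A)) ∈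
      Icc (ENNReal.ofReal (10 / 9 * (L - 11 / 5 * (L / A))))
        (ENNReal.ofReal (10 / 9 * (L + 11 / 5 * (L / A)))) := by
  have h_lower := measure_mono (μ := volume) (hγ.closedBall_subset_isetP hL hA hx)
  have h_upper := measure_mono (μ := volume) (hγ.isetP_subset_closedBall hL hA hx)
  rw [Real.volume_closedBall, ← mul_assoc] at h_lower h_upper
  norm_num only at h_lower h_upper
  exact ⟨h_lower, h_upper⟩

lemma exists_forall_volume_isetP_mem_Icc (hγ : IsHalfParabola γ) {δ : ℝ} (hδ : 0 < δ) :
    ∃ A₀ : ℝ, 1 ≤ A₀ ∧ ∀ A : ℝ, A₀ ≤ A → ∀ x0 y0 L : ℝ, 0 < L → ∀ x ∈ cubeQ x0 y0 L,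
      volume (IsetP γ x (setW1 γ x0 y0 L A)) ∈
        Icc (ENNReal.ofReal (10 / 9 * (1 - δ) * L)) (ENNReal.ofReal (10 / 9 * (1 + δ) * L)) := by
  refine ⟨max 1 (11 / 5 / δ), le_max_left _ _, fun A hA x0 y0 L hL x hx ↦ ?_⟩
  obtain ⟨hA1, hAδ⟩ := max_le_iff.1 hA
  have h_error : 11 / 5 * (L / A) ≤ δ * L := by
    rw [div_le_iff₀ hδ] at hAδ
    rw [← mul_div_assoc, div_le_iff₀ (by linarith)]
    linarith [mul_le_mul_of_nonneg_right hAδ hL.le]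
  exact Icc_subset_Icc (ENNReal.ofReal_le_ofReal (by linarith))
    (ENNReal.ofReal_le_ofReal (by linarith)) (hγ.volume_isetP_mem_Icc hL hA1 hx)

end IsHalfParabola

end Membership

theorem fibre_length_comparable_general {γ : ℝ → ℝ × ℝ} (hγ : IsHalfParabola γ) :
    (∃ c C Astar : ℝ, 0 < c ∧ c < C ∧ 1 ≤ Astar ∧
      ∀ A1 : ℝ, Astar ≤ A1 → ∀ x0 y0 L : ℝ, 0 < L →
        ∀ x ∈ cubeQ x0 y0 L,
          ENNReal.ofReal (c * L) ≤ volume (IsetP γ x (setW1 γ x0 y0 L A1)) ∧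
          volume (IsetP γ x (setW1 γ x0 y0 L A1)) ≤ ENNReal.ofReal (C * L)) ∧
    ∀ ε : ℝ, 0 < ε → ∃ Astar2 : ℝ, 1 ≤ Astar2 ∧
      ∀ A1 : ℝ, Astar2 ≤ A1 → ∀ x0 y0 L : ℝ, 0 < L →
        ∀ x ∈ cubeQ x0 y0 L, ∀ x' ∈ cubeQ x0 y0 L,
          (volume (IsetP γ x (setW1 γ x0 y0 L A1))).toReal ≤
            (1 + ε) * (volume (IsetP γ x' (setW1 γ x0 y0 L A1))).toReal := by
  constructor
  · obtain ⟨A₀, hA₀, h⟩ := hγ.exists_forall_volume_isetP_mem_Icc (δ := 1 / 2) (by norm_num)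
    exact ⟨_, _, A₀, by norm_num, by norm_num, hA₀, h⟩
  · intro ε hε
    obtain ⟨A₀, hA₀, h⟩ := hγ.exists_forall_volume_isetP_mem_Icc (δ := ε / (2 + ε)) (by positivity)
    refine ⟨A₀, hA₀, fun A hA x0 y0 L hL x hx x' hx' ↦ ?_⟩
    obtain ⟨-, h_upper⟩ := h A hA x0 y0 L hL x hx
    obtain ⟨h_lower, h_upper'⟩ := h A hA x0 y0 L hL x' hx'
    have h_finite := ne_top_of_le_ne_top ENNReal.ofReal_ne_top h_upper'
    calc (volume (IsetP γ x (setW1 γ x0 y0 L A))).toReal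
        ≤ 10 / 9 * (1 + ε / (2 + ε)) * L :=
          ENNReal.toReal_le_of_le_ofReal (by positivity) h_upper
      _ = (1 + ε) * (10 / 9 * (1 - ε / (2 + ε)) * L) := by
          field_simp
          ring
      _ ≤ (1 + ε) * (volume (IsetP γ x' (setW1 γ x0 y0 L A))).toReal := by
          gcongr
          exact (ENNReal.ofReal_le_iff_le_toReal h_finite).1 h_lower

/-- **Comparability and asymptotic equality of fibre lengths.** For
`γ ∈ {γ_adj, γ_opp}`: (a) there are `0 < c < C` and `A* ≥ 1` such that for all
`A₁ ≥ A*`, every `(1,2)`-cube `Q` and every `x ∈ Q`,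
`c·ℓ(I) ≤ m(I(x,+,W₁)) ≤ C·ℓ(I)`; and (b) for every `ε > 0` there is `A** ≥ 1`
such that for all `A₁ ≥ A**` and all `x, x' ∈ Q`,
`m(I(x,+,W₁)) ≤ (1+ε)·m(I(x',+,W₁))`. -/
theorem fibre_length_comparable (γ : ℝ → ℝ × ℝ) (hγ : γ = gAdj ∨ γ = gOpp) :
    (∃ c C Astar : ℝ, 0 < c ∧ c < C ∧ 1 ≤ Astar ∧
      ∀ A1 : ℝ, Astar ≤ A1 → ∀ x0 y0 L : ℝ, 0 < L →
        ∀ x ∈ cubeQ x0 y0 L,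
          ENNReal.ofReal (c * L) ≤ volume (IsetP γ x (setW1 γ x0 y0 L A1)) ∧
          volume (IsetP γ x (setW1 γ x0 y0 L A1)) ≤ ENNReal.ofReal (C * L)) ∧
    ∀ ε : ℝ, 0 < ε → ∃ Astar2 : ℝ, 1 ≤ Astar2 ∧
      ∀ A1 : ℝ, Astar2 ≤ A1 → ∀ x0 y0 L : ℝ, 0 < L →
        ∀ x ∈ cubeQ x0 y0 L, ∀ x' ∈ cubeQ x0 y0 L,
          (volume (IsetP γ x (setW1 γ x0 y0 L A1))).toReal ≤
            (1 + ε) * (volume (IsetP γ x' (setW1 γ x0 y0 L A1))).toReal := by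
  rcases hγ with rfl | rfl
  · exact fibre_length_comparable_general isHalfParabola_gAdj
  · exact fibre_length_comparable_general isHalfParabola_gOpp

end
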